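/- Let $R_1, R_2$ be commutative local rings with unity such that $R_1$ has two distinct units $u_1, u_2$ and a non-zero element $a$ of its maximal ideal, and $R_2$ has four distinct units $v_1, v_2, v_3, v_4$ and two distinct non-zero elements $b_1, b_2$ of its maximal ideal. Then $\Gamma'(R_1 \times R_2)$ contains $K_{8,4}$ as a subgraph, with parts $\{(u_1,0), (u_2,0), (a,0), (a,b_1), (a,b_2), (u_1,b_1), (u_1,b_2), (u_2,b_1)\}$ and $\{(0,v_1), (0,v_2), (0,v_3), (0,v_4)\}$. -/

import Mathlib

/-- Adjacency in the cozero-divisor graph `Γ'(R)`: both elements are vertices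
(non-zero non-units) and neither lies in the principal ideal generated by the
other. -/
def cozeroAdj {R : Type*} [CommRing R] (x y : R) : Prop :=
  (x ≠ 0 ∧ ¬ IsUnit x) ∧ (y ≠ 0 ∧ ¬ IsUnit y) ∧
    x ∉ Ideal.span {y} ∧ y ∉ Ideal.span {x}

theorem cozeroAdj_iff_not_dvd {R : Type*} [CommRing R] {x y : R} :
    cozeroAdj x y ↔ ¬ x ∣ y ∧ ¬ y ∣ x := by
  simp only [cozeroAdj, Ideal.mem_span_singleton]
  constructor
  · rintro ⟨-, -, hyx, hxy⟩
    exact ⟨hxy, hyx⟩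
  · rintro ⟨hxy, hyx⟩
    exact ⟨⟨fun hx => hyx (hx ▸ dvd_zero y), fun hx => hxy hx.dvd⟩,
      ⟨fun hy => hxy (hy ▸ dvd_zero x), fun hy => hyx hy.dvd⟩, hyx, hxy⟩

theorem cozeroAdj.ne {R : Type*} [CommRing R] {x y : R} (h : cozeroAdj x y) : x ≠ y :=
  fun hxy => (cozeroAdj_iff_not_dvd.mp h).1 hxy.dvd

section Prod

variable {R₁ R₂ : Type*} [CommRing R₁] [CommRing R₂]

theorem cozeroAdj_mk_zero_mk {x : R₁} {y v : R₂} (hx : x ≠ 0) (hy : ¬ IsUnit y)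
    (hv : IsUnit v) : cozeroAdj (x, y) (0, v) := by
  rw [cozeroAdj_iff_not_dvd, Prod.mk_dvd_mk, Prod.mk_dvd_mk]
  exact ⟨fun h => hy (isUnit_of_dvd_unit h.2 hv), fun h => hx (zero_dvd_iff.mp h.1)⟩

theorem stmt6_general {u₁ u₂ a : R₁} {v₁ v₂ v₃ v₄ b₁ b₂ : R₂}
    (hx : [0, u₁, u₂, a].Nodup) (hy : [0, b₁, b₂].Nodup) (hv : [v₁, v₂, v₃, v₄].Nodup)
    (hb₁ : ¬ IsUnit b₁) (hb₂ : ¬ IsUnit b₂) (hv₁ : IsUnit v₁) (hv₂ : IsUnit v₂)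
    (hv₃ : IsUnit v₃) (hv₄ : IsUnit v₄) {A : Fin 8 → R₁ × R₂} {B : Fin 4 → R₁ × R₂}
    (hA : A = ![(u₁, 0), (u₂, 0), (a, 0), (a, b₁), (a, b₂), (u₁, b₁), (u₁, b₂), (u₂, b₁)])
    (hB : B = ![(0, v₁), (0, v₂), (0, v₃), (0, v₄)]) :
    Function.Injective A ∧ Function.Injective B ∧ (∀ i j, A i ≠ B j) ∧
      ∀ i j, cozeroAdj (A i) (B j) := by
  let x := ![u₁, u₂, a]
  let y := ![0, b₁, b₂]
  let v := ![v₁, v₂, v₃, v₄]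
  -- `A` enumerates the grid `{u₁, u₂, a} × {0, b₁, b₂}` without the point `(u₂, b₂)`.
  let σ : Fin 8 → Fin 3 × Fin 3 :=
    ![(0, 0), (1, 0), (2, 0), (2, 1), (2, 2), (0, 1), (0, 2), (1, 1)]
  have hAσ : A = Prod.map x y ∘ σ := by
    rw [hA]; ext i : 1; fin_cases i <;> rfl
  have hBv : B = Prod.mk 0 ∘ v := by
    rw [hB]; ext j : 1; fin_cases j <;> rfl
  have x_injective : Function.Injective x := List.nodup_ofFn.mp hx.of_cons
  have y_injective : Function.Injective y := List.nodup_ofFn.mp hy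
  have v_injective : Function.Injective v := List.nodup_ofFn.mp hv
  have σ_injective : Function.Injective σ := by decide
  have x_ne_zero (i) : x i ≠ 0 := fun h =>
    hx.notMem (h ▸ List.mem_ofFn.mpr ⟨i, rfl⟩)
  have : Nontrivial R₂ := ⟨0, b₁, List.ne_of_not_mem_cons hy.notMem⟩
  have y_not_isUnit (i) : ¬ IsUnit (y i) := by
    fin_cases i
    exacts [not_isUnit_zero, hb₁, hb₂]
  have v_isUnit (j) : IsUnit (v j) := by
    fin_cases j <;> assumption
  have adj (i j) : cozeroAdj (A i) (B j) := by
    rw [hAσ, hBv]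
    exact cozeroAdj_mk_zero_mk (x_ne_zero _) (y_not_isUnit _) (v_isUnit _)
  refine ⟨?_, ?_, fun i j => (adj i j).ne, adj⟩
  · exact hAσ ▸ (x_injective.prodMap y_injective).comp σ_injective
  · exact hBv ▸ (Prod.mk_right_injective 0).comp v_injective

end Prod

/-- Let `R₁, R₂` be commutative local rings, `u₁ ≠ u₂` units of `R₁`,
`a ≠ 0` in the maximal ideal of `R₁`, `v₁, …, v₄` distinct units of `R₂`, and
`b₁ ≠ b₂` non-zero elements of the maximal ideal of `R₂`.  Then
`Γ'(R₁ × R₂)` contains `K_{8,4}` as a subgraph with the indicated parts. -/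
theorem stmt6 (R₁ R₂ : Type*) [CommRing R₁] [CommRing R₂]
    [IsLocalRing R₁] [IsLocalRing R₂]
    (u₁ u₂ : R₁) (hu₁ : IsUnit u₁) (hu₂ : IsUnit u₂) (hu : u₁ ≠ u₂)
    (a : R₁) (ha : a ∈ IsLocalRing.maximalIdeal R₁) (ha0 : a ≠ 0)
    (v₁ v₂ v₃ v₄ : R₂) (hv₁ : IsUnit v₁) (hv₂ : IsUnit v₂) (hv₃ : IsUnit v₃)
    (hv₄ : IsUnit v₄) (hv : ([v₁, v₂, v₃, v₄] : List R₂).Pairwise (· ≠ ·))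
    (b₁ b₂ : R₂) (hb₁ : b₁ ∈ IsLocalRing.maximalIdeal R₂)
    (hb₂ : b₂ ∈ IsLocalRing.maximalIdeal R₂)
    (hb₁0 : b₁ ≠ 0) (hb₂0 : b₂ ≠ 0) (hb : b₁ ≠ b₂)
    (A : Fin 8 → R₁ × R₂) (B : Fin 4 → R₁ × R₂)
    (hA : A = ![(u₁, 0), (u₂, 0), (a, 0), (a, b₁), (a, b₂), (u₁, b₁), (u₁, b₂), (u₂, b₁)])
    (hB : B = ![(0, v₁), (0, v₂), (0, v₃), (0, v₄)]) :
    Function.Injective A ∧ Function.Injective B ∧ (∀ i j, A i ≠ B j) ∧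
      ∀ i j, cozeroAdj (A i) (B j) := by
  have ne_a {u : R₁} (hu : IsUnit u) : u ≠ a := fun h => ha (h ▸ hu)
  exact stmt6_general
    (by simp [hu₁.ne_zero.symm, hu₂.ne_zero.symm, ha0.symm, hu, ne_a hu₁, ne_a hu₂])
    (by simp [hb₁0.symm, hb₂0.symm, hb]) hv hb₁ hb₂ hv₁ hv₂ hv₃ hv₄ hA hB
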